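/- In an anchored tree T-bar, a vertex is a leaf of T-bar if and only if it is an anchor of T-bar. -/

import Mathlib

open Set

universe u

/-- A topological embedding of a simple graph in the plane: vertices are mapped to
distinct points and every edge is realized by a simple arc joining the images of its
endpoints, such that two arcs of distinct edges meet only in common endpoints and no
vertex point lies in the interior of an arc. -/
structure PlaneEmbedding {V : Type u} (G : SimpleGraph V) where
  pos : V → ℝ × ℝ
  pos_inj : Function.Injective pos
  arc : ∀ ⦃u v : V⦄, G.Adj u v → Set (ℝ × ℝ)
  arc_symm : ∀ ⦃u v : V⦄ (h : G.Adj u v), arc h.symm = arc h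
  arc_curve : ∀ ⦃u v : V⦄ (h : G.Adj u v), ∃ f : ℝ → ℝ × ℝ,
    ContinuousOn f (Set.Icc 0 1) ∧ Set.InjOn f (Set.Icc 0 1) ∧
    f 0 = pos u ∧ f 1 = pos v ∧ f '' Set.Icc 0 1 = arc h
  arc_inter : ∀ ⦃u v w z : V⦄ (h₁ : G.Adj u v) (h₂ : G.Adj w z),
    s(u, v) ≠ s(w, z) → arc h₁ ∩ arc h₂ ⊆ ({pos u, pos v} ∩ {pos w, pos z} : Set (ℝ × ℝ))
  pos_arc : ∀ ⦃u v : V⦄ (h : G.Adj u v) (w : V), pos w ∈ arc h → w = u ∨ w = v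

/-- A graph is planar if it admits a topological embedding in the plane. -/
def SimpleGraph.IsPlanar {V : Type u} (G : SimpleGraph V) : Prop :=
  Nonempty (PlaneEmbedding G)

/-- The point set covered by a plane embedding. -/
def PlaneEmbedding.drawing {V : Type u} {G : SimpleGraph V} (E : PlaneEmbedding G) :
    Set (ℝ × ℝ) :=
  Set.range E.pos ∪ ⋃ (u : V) (v : V) (h : G.Adj u v), E.arc h

/-- A face of a plane embedding is a connected component of the complement of the drawing. -/
def PlaneEmbedding.IsFace {V : Type u} {G : SimpleGraph V} (E : PlaneEmbedding G)
    (F : Set (ℝ × ℝ)) : Prop :=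
  ∃ p, p ∉ E.drawing ∧ F = connectedComponentIn E.drawingᶜ p

/-- A vertex is incident to a face if its point lies on the boundary of the face. -/
def PlaneEmbedding.VertexOnFace {V : Type u} {G : SimpleGraph V} (E : PlaneEmbedding G)
    (v : V) (F : Set (ℝ × ℝ)) : Prop :=
  E.pos v ∈ closure F

/-- Maximum degree at most `d`. -/
def SimpleGraph.MaxDegreeLE {V : Type u} (G : SimpleGraph V) (d : ℕ) : Prop :=
  ∀ v : V, (G.neighborSet v).ncard ≤ d

/-- A graph is triconnected (3-connected) if it has more than three vertices, is
connected, and stays connected after removing any two vertices. -/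
def SimpleGraph.IsTriconnected {V : Type u} (G : SimpleGraph V) : Prop :=
  3 < Nat.card V ∧ G.Connected ∧
    ∀ u v : V, (G.induce {w : V | w ≠ u ∧ w ≠ v}).Connected

/-- A graph is biconnected (2-connected) if it has more than two vertices, is
connected, and stays connected after removing any single vertex. -/
def SimpleGraph.IsBiconnected {V : Type u} (G : SimpleGraph V) : Prop :=
  2 < Nat.card V ∧ G.Connected ∧ ∀ u : V, (G.induce {w : V | w ≠ u}).Connected

/-- A graph is subhamiltonian if it is a spanning subgraph of a planar hamiltonian graph. -/
def SimpleGraph.IsSubhamiltonian {V : Type u} [Fintype V] (G : SimpleGraph V) : Prop :=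
  ∃ H : SimpleGraph V, G ≤ H ∧ H.IsPlanar ∧ (letI := Classical.decEq V; H.IsHamiltonian)

/-- The graph consisting of the edges of the cyclic vertex sequence `σ`. -/
def cyclicSuccGraph {W : Type u} (σ : ZMod (Nat.card W) ≃ W) : SimpleGraph W :=
  SimpleGraph.fromRel fun u v => ∃ i, u = σ i ∧ v = σ (i + 1)

/-- The cyclic ordering `σ` of all vertices of `G` is a subhamiltonian cycle for `G` if
adding the edges between consecutive vertices of `σ` keeps the graph planar. -/
def SimpleGraph.IsSubhamiltonianCycle {W : Type u} (G : SimpleGraph W)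
    (σ : ZMod (Nat.card W) ≃ W) : Prop :=
  SimpleGraph.IsPlanar (G ⊔ cyclicSuccGraph σ)

/-- The edges (pairs of consecutive vertices) of the cyclic sequence `σ`. -/
def cycleEdges {W : Type u} (σ : ZMod (Nat.card W) ≃ W) : Set (Sym2 W) :=
  {e | ∃ i, e = s(σ i, σ (i + 1))}

/-- The subhamiltonian cycle `σ` crosses the face `F` at position `i` if the two
consecutive vertices `σ i` and `σ (i+1)` are both incident to `F` but not adjacent. -/
def CrossesFaceAt {V : Type u} {G : SimpleGraph V} (E : PlaneEmbedding G)
    (σ : ZMod (Nat.card V) ≃ V) (F : Set (ℝ × ℝ)) (i : ZMod (Nat.card V)) : Prop :=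
  E.VertexOnFace (σ i) F ∧ E.VertexOnFace (σ (i + 1)) F ∧ ¬ G.Adj (σ i) (σ (i + 1))

/-- A separating triangle: a triangle whose removal disconnects the graph. -/
def SimpleGraph.IsSepTriangle {V : Type u} (G : SimpleGraph V) (a b c : V) : Prop :=
  G.Adj a b ∧ G.Adj b c ∧ G.Adj a c ∧
    ¬ (G.induce {v : V | v ≠ a ∧ v ≠ b ∧ v ≠ c}).Connected

section Triangle

variable {V : Type u} {G : SimpleGraph V} (E : PlaneEmbedding G) {a b c : V}

/-- The Jordan curve formed by the drawing of the triangle `a b c`. -/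
def triangleDrawing (hab : G.Adj a b) (hbc : G.Adj b c) (hac : G.Adj a c) :
    Set (ℝ × ℝ) :=
  E.arc hab ∪ E.arc hbc ∪ E.arc hac

/-- The vertices strictly inside the triangle `a b c` (bounded side of the Jordan curve). -/
def insideTriangle (hab : G.Adj a b) (hbc : G.Adj b c) (hac : G.Adj a c) : Set V :=
  {v | v ≠ a ∧ v ≠ b ∧ v ≠ c ∧
    Bornology.IsBounded
      (connectedComponentIn (triangleDrawing E hab hbc hac)ᶜ (E.pos v))}

/-- The vertices strictly outside the triangle `a b c` (unbounded side of the Jordan curve). -/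
def outsideTriangle (hab : G.Adj a b) (hbc : G.Adj b c) (hac : G.Adj a c) : Set V :=
  {v | v ≠ a ∧ v ≠ b ∧ v ≠ c ∧
    ¬ Bornology.IsBounded
      (connectedComponentIn (triangleDrawing E hab hbc hac)ᶜ (E.pos v))}

end Triangle
section Blocks

variable {V : Type u} {G : SimpleGraph V} {v0 : V}

/-- The point set covered by the drawing of the edges of a closed walk. -/
def cycleDrawing (E : PlaneEmbedding G) (w : G.Walk v0 v0) : Set (ℝ × ℝ) :=
  {p | ∃ (u v : V) (h : G.Adj u v), s(u, v) ∈ w.edges ∧ p ∈ E.arc h}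

/-- The vertices of `G` strictly inside the cycle `w` (in the bounded part of the
complement of the Jordan curve drawn by `w`). -/
def insideCycle (E : PlaneEmbedding G) (w : G.Walk v0 v0) : Set V :=
  {u | u ∉ w.support ∧
    Bornology.IsBounded (connectedComponentIn (cycleDrawing E w)ᶜ (E.pos u))}

/-- `in(C)`: the subgraph of `G` induced by the vertices strictly inside the cycle. -/
def innerGraph (E : PlaneEmbedding G) (w : G.Walk v0 v0) :
    SimpleGraph ↥(insideCycle E w) :=
  G.induce (insideCycle E w)

/-- `in⁺(C)`: the subgraph of `G` induced by the cycle together with the vertices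
strictly inside it. -/
def closedInnerSet (E : PlaneEmbedding G) (w : G.Walk v0 v0) : Set V :=
  {u | u ∈ w.support} ∪ insideCycle E w

/-- The graph `in(C)` with all its bridges deleted; its connected components are the
bridge-blocks of `in(C)`. -/
def bridgelessInner (E : PlaneEmbedding G) (w : G.Walk v0 v0) :
    SimpleGraph ↥(insideCycle E w) :=
  (innerGraph E w).deleteEdges {e | (innerGraph E w).IsBridge e}

/-- Block-vertices: the bridge-blocks of `in(C)`, i.e. the connected components
obtained after deleting all bridges of `in(C)`. -/
abbrev BlockVertex (E : PlaneEmbedding G) (w : G.Walk v0 v0) :=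
  (bridgelessInner E w).ConnectedComponent

/-- The block-vertex (bridge-block) containing a given vertex of `in(C)`. -/
def blockOf (E : PlaneEmbedding G) (w : G.Walk v0 v0) (u : ↥(insideCycle E w)) :
    BlockVertex E w :=
  (bridgelessInner E w).connectedComponentMk u

/-- A block-vertex is an anchor if it is adjacent (in `G`) to a vertex of the cycle. -/
def IsAnchor (E : PlaneEmbedding G) (w : G.Walk v0 v0) (b : BlockVertex E w) : Prop :=
  ∃ u : ↥(insideCycle E w), blockOf E w u = b ∧ ∃ z ∈ w.support, G.Adj ↑u z

/-- The graph on block-vertices: two blocks are adjacent iff some edge of `in(C)`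
joins them. -/
def blockGraph (E : PlaneEmbedding G) (w : G.Walk v0 v0) :
    SimpleGraph (BlockVertex E w) :=
  SimpleGraph.fromRel fun b b' => ∃ u u' : ↥(insideCycle E w),
    blockOf E w u = b ∧ blockOf E w u' = b' ∧ (innerGraph E w).Adj u u'

/-- The ancillaries: block-vertices that are not anchors. -/
def ancillarySet (E : PlaneEmbedding G) (w : G.Walk v0 v0) : Set (BlockVertex E w) :=
  {b | ¬ IsAnchor E w b}

/-- The forest formed by the ancillaries. -/
def ancForest (E : PlaneEmbedding G) (w : G.Walk v0 v0) :
    SimpleGraph ↥(ancillarySet E w) :=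
  (blockGraph E w).induce (ancillarySet E w)

/-- The trees of the forest of ancillaries. -/
abbrev TreeIndex (E : PlaneEmbedding G) (w : G.Walk v0 v0) :=
  (ancForest E w).ConnectedComponent

/-- The ancillaries belonging to the tree `t` of the forest of ancillaries. -/
def ancillariesOf (E : PlaneEmbedding G) (w : G.Walk v0 v0) (t : TreeIndex E w) :
    Set (BlockVertex E w) :=
  {b | ∃ h : b ∈ ancillarySet E w, (ancForest E w).connectedComponentMk ⟨b, h⟩ = t}

/-- The anchors of the anchored tree of `t`: the anchors adjacent to at least one
ancillary of `t`. -/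
def anchorsOf (E : PlaneEmbedding G) (w : G.Walk v0 v0) (t : TreeIndex E w) :
    Set (BlockVertex E w) :=
  {x | IsAnchor E w x ∧ ∃ b ∈ ancillariesOf E w t, (blockGraph E w).Adj x b}

/-- The vertex set of the anchored tree of `t`. -/
def anchoredTreeSet (E : PlaneEmbedding G) (w : G.Walk v0 v0) (t : TreeIndex E w) :
    Set (BlockVertex E w) :=
  ancillariesOf E w t ∪ anchorsOf E w t

/-- The anchored tree of `t`: the tree `t` together with its anchors. -/
def anchoredTree (E : PlaneEmbedding G) (w : G.Walk v0 v0) (t : TreeIndex E w) :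
    SimpleGraph ↥(anchoredTreeSet E w t) :=
  (blockGraph E w).induce (anchoredTreeSet E w t)

end Blocks

/-- `v` lies on the (unique) path from `r` to `u` in the tree `T`; for trees this
expresses that `u` belongs to the subtree rooted at `v` when `T` is rooted at `r`. -/
def InSubtree {W : Type u} (T : SimpleGraph W) (r v u : W) : Prop :=
  ∀ p : T.Walk r u, p.IsPath → v ∈ p.support

/-- `lab` is the labeling of the tree `T`, rooted at `r`, by a pre-order traversal
(with respect to some ordering of the children of each vertex): labels are distinct,
the root gets label `0`, and the labels of each subtree form a contiguous interval
starting at the label of its root. -/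
def IsPreorderLabeling {W : Type u} (T : SimpleGraph W) (r : W) (lab : W → ℕ) : Prop :=
  Function.Injective lab ∧ lab r = 0 ∧
    ∀ v : W, lab '' {u | InSubtree T r v u} =
      Set.Ico (lab v) (lab v + Nat.card {u | InSubtree T r v u})

/-!
Contracting the bridge-blocks of `in(C)` gives a forest, and in a forest a vertex outside a
connected set has at most one neighbour in that set. Removing an anchor `x` of the anchored tree
leaves a connected set, because every other anchor hangs off an ancillary of `t`; hence `x` has
exactly one neighbour, the ancillary witnessing that it is an anchor of the tree.

Conversely, no edge of `G` leaves an ancillary block `x` except the bridges of `in(C)`: the arc of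
an edge between vertices off `C` does not meet `C`, so both ends are on the same side. Distinct
bridges at `x` lead to distinct blocks. If `x` were a leaf, the far end of its only bridge would
therefore be a cut vertex of `G`, separating `x` from `C`.
-/

section Graphs

variable {V : Type*} {W : Type*} {G : SimpleGraph V}

theorem ncard_neighborSet_induce {s : Set V} (x : s) :
    ((G.induce s).neighborSet x).ncard = (G.neighborSet x ∩ s).ncard :=
  Set.ncard_subtype (· ∈ s) (G.neighborSet x)

theorem preconnected_induce_of_forall_exists_adj {s t : Set V} (hs : (G.induce s).Preconnected)
    (hst : s ⊆ t) (hadj : ∀ v ∈ t \ s, ∃ u ∈ s, G.Adj v u) : (G.induce t).Preconnected := by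
  have reach_s (v : t) : ∃ u, ∃ hu : u ∈ s, (G.induce t).Reachable v ⟨u, hst hu⟩ := by
    by_cases hv : v.1 ∈ s
    · exact ⟨v, hv, .rfl⟩
    · obtain ⟨u, hu, hvu⟩ := hadj v ⟨v.2, hv⟩
      exact ⟨u, hu, SimpleGraph.Adj.reachable hvu⟩
  intro v v'
  obtain ⟨u, hu, hvu⟩ := reach_s v
  obtain ⟨u', hu', hvu'⟩ := reach_s v'
  have huu' := (hs ⟨u, hu⟩ ⟨u', hu'⟩).map (G.induceHomOfLE hst).toHom
  exact hvu.trans (huu'.trans hvu'.symm)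

theorem subsingleton_neighborSet_inter_of_isAcyclic (hG : G.IsAcyclic) {s : Set V}
    (hs : (G.induce s).Preconnected) {x : V} (hx : x ∉ s) :
    (G.neighborSet x ∩ s).Subsingleton := by
  rintro y ⟨hxy, hy⟩ z ⟨hxz, hz⟩
  obtain ⟨q, hxq⟩ : ∃ q : G.Walk y z, x ∉ q.support := by
    obtain ⟨p⟩ := hs ⟨y, hy⟩ ⟨z, hz⟩
    refine ⟨p.map (SimpleGraph.Embedding.induce s).toHom, fun hmem ↦ ?_⟩
    obtain ⟨u, -, rfl⟩ := List.mem_map.1 (p.support_map _ ▸ hmem)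
    exact hx u.2
  have hbridge := SimpleGraph.isAcyclic_iff_forall_adj_isBridge.1 hG hxz
  have hmem := SimpleGraph.isBridge_iff_forall_walk_mem_edges.1 hbridge (.cons hxy q)
  rcases List.mem_cons.1 hmem with heq | hmem
  · exact (Sym2.congr_right.1 heq).symm
  · exact absurd (q.fst_mem_support_of_mem_edges hmem) hxq

theorem exists_adj_ne_of_preconnected_induce_ne {U : Set V} {a b z : V}
    (hG : (G.induce {v | v ≠ b}).Preconnected) (ha : a ∈ U) (hab : a ≠ b) (hz : z ∉ U)
    (hzb : z ≠ b) : ∃ c ∈ U, ∃ d ∉ U, d ≠ b ∧ G.Adj c d := by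
  obtain ⟨p⟩ := hG ⟨a, hab⟩ ⟨z, hzb⟩
  obtain ⟨d, -, hfst, hsnd⟩ := p.exists_boundary_dart (Subtype.val ⁻¹' U) ha hz
  exact ⟨d.fst, hfst, d.snd, hsnd, d.snd.2, d.adj⟩

theorem reachable_of_reachable_map {f : V → W} (hf : ∀ a b, f a = f b → G.Reachable a b)
    {c d : V} (h : (G.map f).Reachable (f c) (f d)) : G.Reachable c d := by
  obtain ⟨p⟩ := h
  generalize hx : f c = x, hy : f d = y at p
  induction p generalizing c with
  | nil => exact hf c d (hx.trans hy.symm)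
  | cons hadj _ ih =>
    obtain ⟨-, a, b, hab, ha, hb⟩ := hadj
    exact ((hf c a (hx.trans ha.symm)).trans hab.reachable).trans (ih hb hy)

end Graphs

section BridgeBlocks

/-- The fibres of `f` are the bridge-blocks of `G`, so that `G.map f` is the graph obtained from
`G` by contracting each bridge-block. The blocks are labelled by an arbitrary type, so that no
particular construction of the quotient is imposed. -/
def IsBridgeBlockMap {V W : Type*} (G : SimpleGraph V) (f : V → W) : Prop :=
  ∀ ⦃a b : V⦄, f a = f b ↔ (G.deleteEdges {e | G.IsBridge e}).Reachable a b

namespace IsBridgeBlockMap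

variable {V : Type*} {W : Type*} {G : SimpleGraph V} {f : V → W} {a b c d : V}

theorem isBridge_of_adj_of_ne (hf : IsBridgeBlockMap G f) (hab : G.Adj a b) (hne : f a ≠ f b) :
    G.IsBridge s(a, b) := by
  by_contra hbridge
  have hab' : (G.deleteEdges {e | G.IsBridge e}).Adj a b :=
    SimpleGraph.deleteEdges_adj.2 ⟨hab, hbridge⟩
  exact hne (hf.2 hab'.reachable)

theorem reachable_deleteEdges_of_eq (hf : IsBridgeBlockMap G f) {e : Sym2 V} (he : G.IsBridge e)
    (hab : f a = f b) : (G.deleteEdges {e}).Reachable a b :=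
  have hsub : {e} ⊆ {e | G.IsBridge e} := Set.singleton_subset_iff.2 he
  (hf.1 hab).mono (SimpleGraph.deleteEdges_anti hsub)

theorem not_reachable_map_deleteEdges (hf : IsBridgeBlockMap G f) (hab : G.Adj a b)
    (hne : f a ≠ f b) : ¬ ((G.deleteEdges {s(a, b)}).map f).Reachable (f a) (f b) := by
  have hbridge := hf.isBridge_of_adj_of_ne hab hne
  exact fun h ↦ SimpleGraph.isBridge_iff.1 hbridge <|
    reachable_of_reachable_map (fun _ _ ↦ hf.reachable_deleteEdges_of_eq hbridge) h

theorem edge_eq_of_adj_of_adj (hf : IsBridgeBlockMap G f) (hab : G.Adj a b) (hcd : G.Adj c d)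
    (hac : f a = f c) (hbd : f b = f d) (hne : f a ≠ f b) : s(a, b) = s(c, d) := by
  by_contra hedge
  have hcd' : (G.deleteEdges {s(a, b)}).Adj c d :=
    SimpleGraph.deleteEdges_adj.2 ⟨hcd, Ne.symm hedge⟩
  refine hf.not_reachable_map_deleteEdges hab hne ?_
  rw [hac, hbd] at hne ⊢
  exact (SimpleGraph.map_adj_apply' hcd' hne).reachable

theorem isAcyclic_map (hf : IsBridgeBlockMap G f) : (G.map f).IsAcyclic := by
  rw [SimpleGraph.isAcyclic_iff_forall_adj_isBridge]
  rintro _ _ ⟨hne, a, b, hab, rfl, rfl⟩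
  have hle : (G.map f).deleteEdges {s(f a, f b)} ≤ (G.deleteEdges {s(a, b)}).map f := by
    intro x y hxy
    obtain ⟨⟨hxy, c, d, hcd, rfl, rfl⟩, hedge⟩ := SimpleGraph.deleteEdges_adj.1 hxy
    refine ⟨hxy, c, d, SimpleGraph.deleteEdges_adj.2 ⟨hcd, fun h ↦ hedge ?_⟩, rfl, rfl⟩
    exact congrArg (Sym2.map f) h
  exact SimpleGraph.isBridge_iff.2 fun h ↦ hf.not_reachable_map_deleteEdges hab hne (h.mono hle)

theorem ncard_neighborSet_map_ne_one {S : Set V} {f : S → W}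
    (hf : IsBridgeBlockMap (G.induce S) f) (hG : ∀ v, (G.induce {u | u ≠ v}).Preconnected)
    {z : V} (hz : z ∉ S) {x : W} (hx : ∀ u : S, f u = x → ∀ v, G.Adj u v → v ∈ S) :
    (((G.induce S).map f).neighborSet x).ncard ≠ 1 := by
  intro hcard
  obtain ⟨y, hy⟩ := Set.ncard_eq_one.1 hcard
  have hxy : y ∈ ((G.induce S).map f).neighborSet x := hy ▸ Set.mem_singleton y
  obtain ⟨hne, a, b, hab, rfl, rfl⟩ := hxy
  let U : Set V := {v | ∃ h : v ∈ S, f ⟨v, h⟩ = f a}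
  obtain ⟨c, ⟨hcS, hca⟩, d, hdU, hdb, hcd⟩ : ∃ c ∈ U, ∃ d ∉ U, d ≠ b ∧ G.Adj c d :=
    exists_adj_ne_of_preconnected_induce_ne (hG b) ⟨a.2, rfl⟩ (SimpleGraph.Adj.ne hab)
      (fun h ↦ hz h.1) (fun h ↦ hz (h ▸ b.2))
  have hdS : d ∈ S := hx ⟨c, hcS⟩ hca d hcd
  have hcd' : (G.induce S).Adj ⟨c, hcS⟩ ⟨d, hdS⟩ := hcd
  have hda : f a ≠ f ⟨d, hdS⟩ := fun h ↦ hdU ⟨hdS, h.symm⟩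
  have hadj : f ⟨d, hdS⟩ ∈ ((G.induce S).map f).neighborSet (f a) := ⟨hda, _, _, hcd', hca, rfl⟩
  rw [hy, Set.mem_singleton_iff] at hadj
  have hedge := hf.edge_eq_of_adj_of_adj hab hcd' hca.symm hadj.symm hne
  rcases Sym2.eq_iff.1 hedge with ⟨-, hbd⟩ | ⟨had, -⟩
  · exact hdb (congrArg Subtype.val hbd).symm
  · exact hda (congrArg f had)

end IsBridgeBlockMap

end BridgeBlocks

section InsideCycle

variable {V : Type u} {G : SimpleGraph V} {v0 a b : V} (E : PlaneEmbedding G) (w : G.Walk v0 v0)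

theorem PlaneEmbedding.isPreconnected_arc (hab : G.Adj a b) : IsPreconnected (E.arc hab) := by
  obtain ⟨f, hf, -, -, -, himage⟩ := E.arc_curve hab
  exact himage ▸ isPreconnected_Icc.image f hf

theorem PlaneEmbedding.pos_fst_mem_arc (hab : G.Adj a b) : E.pos a ∈ E.arc hab := by
  obtain ⟨f, -, -, hf0, -, himage⟩ := E.arc_curve hab
  exact himage ▸ ⟨0, Set.left_mem_Icc.2 zero_le_one, hf0⟩

theorem PlaneEmbedding.pos_snd_mem_arc (hab : G.Adj a b) : E.pos b ∈ E.arc hab :=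
  E.arc_symm hab ▸ E.pos_fst_mem_arc hab.symm

variable {w}

theorem disjoint_arc_cycleDrawing (hab : G.Adj a b) (ha : a ∉ w.support) (hb : b ∉ w.support) :
    Disjoint (E.arc hab) (cycleDrawing E w) := by
  rw [Set.disjoint_left]
  rintro p hp ⟨c, d, hcd, hedge, hp'⟩
  have hc : c ∈ w.support := w.fst_mem_support_of_mem_edges hedge
  have hd : d ∈ w.support := w.snd_mem_support_of_mem_edges hedge
  have hne : s(a, b) ≠ s(c, d) := fun h ↦
    ha (w.fst_mem_support_of_mem_edges (h ▸ hedge))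
  have hend (x y : V) (hx : x ∉ w.support) (hy : y ∈ w.support) (hpx : p = E.pos x) :
      p ≠ E.pos y :=
    fun hpy ↦ hx (E.pos_inj (hpx.symm.trans hpy) ▸ hy)
  obtain ⟨hpa | hpb, hpc | hpd⟩ := E.arc_inter hab hcd hne ⟨hp, hp'⟩
  · exact hend a c ha hc hpa hpc
  · exact hend a d ha hd hpa hpd
  · exact hend b c hb hc hpb hpc
  · exact hend b d hb hd hpb hpd

theorem mem_insideCycle_of_adj (ha : a ∈ insideCycle E w) (hab : G.Adj a b)
    (hb : b ∉ w.support) : b ∈ insideCycle E w := by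
  have hsub : E.arc hab ⊆ (cycleDrawing E w)ᶜ :=
    (disjoint_arc_cycleDrawing E hab ha.1 hb).subset_compl_right
  have hmem := (E.isPreconnected_arc hab).subset_connectedComponentIn (E.pos_fst_mem_arc hab) hsub
    (E.pos_snd_mem_arc hab)
  exact ⟨hb, connectedComponentIn_eq hmem ▸ ha.2⟩

end InsideCycle

section AnchoredTree

variable {V : Type u} {G : SimpleGraph V} {v0 : V} (E : PlaneEmbedding G) (w : G.Walk v0 v0)

theorem isBridgeBlockMap_blockOf : IsBridgeBlockMap (innerGraph E w) (blockOf E w) :=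
  fun _ _ ↦ SimpleGraph.ConnectedComponent.eq

theorem blockGraph_eq_map : blockGraph E w = (innerGraph E w).map (blockOf E w) := by
  ext x y
  rw [blockGraph, SimpleGraph.fromRel_adj, SimpleGraph.map_adj']
  refine and_congr_right fun _ ↦ ⟨?_, fun ⟨a, b, hab, ha, hb⟩ ↦ Or.inl ⟨a, b, ha, hb, hab⟩⟩
  rintro (⟨a, b, ha, hb, hab⟩ | ⟨a, b, ha, hb, hab⟩)
  · exact ⟨a, b, hab, ha, hb⟩
  · exact ⟨b, a, hab.symm, hb, ha⟩

theorem isAcyclic_blockGraph : (blockGraph E w).IsAcyclic :=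
  blockGraph_eq_map E w ▸ (isBridgeBlockMap_blockOf E w).isAcyclic_map

variable {E w} {t : TreeIndex E w} {x : BlockVertex E w}

theorem ncard_neighborSet_blockGraph_ne_one (hG : ∀ v, (G.induce {u | u ≠ v}).Preconnected)
    (hx : ¬ IsAnchor E w x) : ((blockGraph E w).neighborSet x).ncard ≠ 1 := by
  rw [blockGraph_eq_map]
  refine (isBridgeBlockMap_blockOf E w).ncard_neighborSet_map_ne_one hG
    (fun hv0 : v0 ∈ insideCycle E w ↦ hv0.1 w.start_mem_support) fun u hu v huv ↦ ?_
  exact mem_insideCycle_of_adj E u.2 huv fun hv ↦ hx ⟨u, hu, v, hv, huv⟩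

theorem neighborSet_subset_anchoredTreeSet (hx : x ∈ ancillariesOf E w t) :
    (blockGraph E w).neighborSet x ⊆ anchoredTreeSet E w t := by
  intro y hxy
  by_cases hy : IsAnchor E w y
  · exact Or.inr ⟨hy, x, hx, hxy.symm⟩
  · obtain ⟨hx, rfl⟩ := hx
    have hyx : (ancForest E w).Adj ⟨y, hy⟩ ⟨x, hx⟩ := hxy.symm
    exact Or.inl ⟨hy, SimpleGraph.ConnectedComponent.sound hyx.reachable⟩

theorem preconnected_induce_ancillariesOf (t : TreeIndex E w) :
    ((blockGraph E w).induce (ancillariesOf E w t)).Preconnected := by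
  rintro ⟨b, hb, hbt⟩ ⟨c, hc, hct⟩
  let incl : t.toSimpleGraph →g (blockGraph E w).induce (ancillariesOf E w t) :=
    { toFun := fun a ↦ ⟨a.1.1, a.1.2, a.2⟩
      map_rel' := id }
  exact (t.connected_toSimpleGraph.preconnected ⟨⟨b, hb⟩, hbt⟩ ⟨⟨c, hc⟩, hct⟩).map incl

theorem preconnected_induce_anchoredTreeSet_sdiff_singleton (hx : IsAnchor E w x) :
    ((blockGraph E w).induce (anchoredTreeSet E w t \ {x})).Preconnected := by
  refine preconnected_induce_of_forall_exists_adj (preconnected_induce_ancillariesOf t)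
    (fun b hb ↦ ⟨Or.inl hb, fun hbx ↦ hb.1 (hbx ▸ hx)⟩) ?_
  rintro y ⟨⟨hy | hy, -⟩, hyt⟩
  · exact absurd hy hyt
  · exact hy.2

theorem ncard_neighborSet_inter_anchoredTreeSet_eq_one (hx : x ∈ anchorsOf E w t) :
    ((blockGraph E w).neighborSet x ∩ anchoredTreeSet E w t).ncard = 1 := by
  obtain ⟨hanchor, b, hb, hxb⟩ := hx
  have hsub := subsingleton_neighborSet_inter_of_isAcyclic (isAcyclic_blockGraph E w)
    (preconnected_induce_anchoredTreeSet_sdiff_singleton (t := t) hanchor) (fun h ↦ h.2 rfl)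
  have hmono : (blockGraph E w).neighborSet x ∩ anchoredTreeSet E w t ⊆
      (blockGraph E w).neighborSet x ∩ (anchoredTreeSet E w t \ {x}) :=
    fun y ⟨(hxy : (blockGraph E w).Adj x y), hy⟩ ↦ ⟨hxy, hy, hxy.ne'⟩
  exact Set.ncard_eq_one.2 ⟨b, (hsub.anti hmono).eq_singleton_of_mem ⟨hxb, Or.inl hb⟩⟩

end AnchoredTree

theorem anchored_tree_leaf_iff_anchor_general {V : Type u} {G : SimpleGraph V}
    (hG : ∀ v, (G.induce {u | u ≠ v}).Preconnected) (E : PlaneEmbedding G)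
    {v0 : V} (w : G.Walk v0 v0) (t : TreeIndex E w) (x : ↥(anchoredTreeSet E w t)) :
    ((anchoredTree E w t).neighborSet x).ncard = 1 ↔ ↑x ∈ anchorsOf E w t := by
  rw [anchoredTree, ncard_neighborSet_induce]
  refine ⟨fun hleaf ↦ x.2.resolve_left fun hx ↦ ?_, ncard_neighborSet_inter_anchoredTreeSet_eq_one⟩
  rw [Set.inter_eq_left.2 (neighborSet_subset_anchoredTreeSet hx)] at hleaf
  exact ncard_neighborSet_blockGraph_ne_one hG hx.1 hleaf

/-- In an anchored tree, a vertex is a leaf iff it is an anchor of the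
anchored tree. -/
theorem anchored_tree_leaf_iff_anchor {V : Type u} {G : SimpleGraph V}
    (hbic : G.IsBiconnected) (hdeg : G.MaxDegreeLE 4) (E : PlaneEmbedding G)
    {v0 : V} (w : G.Walk v0 v0) (hw : w.IsCycle) (t : TreeIndex E w)
    (x : ↥(anchoredTreeSet E w t)) :
    ((anchoredTree E w t).neighborSet x).ncard = 1 ↔ ↑x ∈ anchorsOf E w t :=
  anchored_tree_leaf_iff_anchor_general (fun v ↦ (hbic.2.2 v).preconnected) E w t x
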